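/- arXiv:1906.07583 — 2 statements merged into one kernel-verified Lean document; each statement's English description precedes it below -/
import Mathlib

section
/- Let N ≥ 2 be an integer. For every real-valued smooth function φ with compact support contained in the open upper half-space ℝ^N_+, one has ∫_{ℝ^N_+} |∇φ(x)|² dx ≥ (N²/4) ∫_{ℝ^N_+} φ(x)²/|x|² dx. -/
open MeasureTheory Real Set Filter

noncomputable section

/-- The last coordinate `x_N` of a point in `ℝ^N`. -/
def lastCoord {N : ℕ} (x : EuclideanSpace ℝ (Fin N)) : ℝ :=
  if h : 0 < N then x ⟨N - 1, Nat.sub_lt h one_pos⟩ else 0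

/-- The open upper half-space `ℝ^N_+ = {x : x_N > 0}`. -/
def upperHalf (N : ℕ) : Set (EuclideanSpace ℝ (Fin N)) :=
  {x | 0 < lastCoord x}

/-- The Laplacian, as the sum of second directional derivatives along the standard basis. -/
def lap {N : ℕ} (f : EuclideanSpace ℝ (Fin N) → ℝ) (x : EuclideanSpace ℝ (Fin N)) : ℝ :=
  ∑ i : Fin N, iteratedFDeriv ℝ 2 f x ![EuclideanSpace.single i 1, EuclideanSpace.single i 1]

/-- The vector field `∇ log (x_N |x|^{-N/2})`, by coordinates. -/
def hvec {N : ℕ} (n i : Fin N) (x : EuclideanSpace ℝ (Fin N)) : ℝ :=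
  (if i = n then 1 else 0) * (x n)⁻¹ - (N : ℝ) / 2 * (x i * (‖x‖ ^ 2)⁻¹)

lemma hvec_contDiffAt {N : ℕ} (n i : Fin N) (x : EuclideanSpace ℝ (Fin N)) (hx : 0 < x n) :
    ContDiffAt ℝ 1 (hvec n i) x := by
  have h0 : x ≠ 0 := by rintro rfl; simp at hx
  have hc : ∀ j : Fin N, ContDiffAt ℝ 1 (fun y : EuclideanSpace ℝ (Fin N) => y j) x := fun j =>
    (EuclideanSpace.proj (𝕜 := ℝ) j).contDiff.contDiffAt
  have hn : ContDiffAt ℝ 1 (fun y : EuclideanSpace ℝ (Fin N) => ‖y‖ ^ 2) x :=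
    (contDiff_norm_sq ℝ).contDiffAt
  unfold hvec
  exact (contDiffAt_const.mul ((hc n).inv hx.ne')).sub
    (contDiffAt_const.mul ((hc i).mul (hn.inv (by positivity))))

lemma hvec_fderiv {N : ℕ} (n i : Fin N) (x : EuclideanSpace ℝ (Fin N)) (hx : 0 < x n) :
    fderiv ℝ (hvec n i) x (EuclideanSpace.single i 1) =
      - (if i = n then 1 else 0) * (x n ^ 2)⁻¹
      - (N : ℝ) / 2 * ((‖x‖ ^ 2)⁻¹ - 2 * x i ^ 2 * ((‖x‖ ^ 2)⁻¹) ^ 2) := by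
  have h0 : x ≠ 0 := by rintro rfl; simp at hx
  have hr : ‖x‖ ^ 2 ≠ 0 := by positivity
  have hc : ∀ j : Fin N, HasFDerivAt (fun y : EuclideanSpace ℝ (Fin N) => y j)
      (EuclideanSpace.proj (𝕜 := ℝ) j : EuclideanSpace ℝ (Fin N) →L[ℝ] ℝ) x := fun j =>
    (EuclideanSpace.proj (𝕜 := ℝ) j : EuclideanSpace ℝ (Fin N) →L[ℝ] ℝ).hasFDerivAt
  have hn := (hasStrictFDerivAt_norm_sq x).hasFDerivAt
  have hinv : ∀ {f : EuclideanSpace ℝ (Fin N) → ℝ} {f' : EuclideanSpace ℝ (Fin N) →L[ℝ] ℝ},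
      HasFDerivAt f f' x → f x ≠ 0 →
      HasFDerivAt (fun y => (f y)⁻¹) ((-(f x ^ 2)⁻¹) • f') x := fun hf h =>
    (hasDerivAt_inv h).comp_hasFDerivAt x hf
  have H := ((hinv (hc n) hx.ne').const_mul (if i = n then (1:ℝ) else 0)).sub
    (((hc i).mul (hinv hn hr)).const_mul ((N : ℝ) / 2))
  have : HasFDerivAt (hvec n i) _ x := H
  rw [this.fderiv]
  have hin' : inner ℝ x (EuclideanSpace.single i (1:ℝ)) = x i := by
    rw [EuclideanSpace.inner_single_right]; simp
  by_cases hin : i = n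
  · subst hin
    simp [hin']
    field_simp
    try ring
  · rw [if_neg hin]
    simp [hin, hin']
    field_simp
    try ring

lemma hvec_sum {N : ℕ} (n : Fin N) (x : EuclideanSpace ℝ (Fin N)) (hx : 0 < x n) :
    ∑ i, (hvec n i x ^ 2 + fderiv ℝ (hvec n i) x (EuclideanSpace.single i 1)) =
      - ((N : ℝ) ^ 2 / 4) * (‖x‖ ^ 2)⁻¹ := by
  have h0 : x ≠ 0 := by rintro rfl; simp at hx
  have hr : ‖x‖ ^ 2 ≠ 0 := by positivity
  have hs : ‖x‖ ^ 2 = ∑ i, x i ^ 2 := EuclideanSpace.real_norm_sq_eq x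
  have key : ∀ i, hvec n i x ^ 2 + fderiv ℝ (hvec n i) x (EuclideanSpace.single i 1) =
      (((N : ℝ) ^ 2 / 4 + N) * ((‖x‖ ^ 2)⁻¹) ^ 2) * x i ^ 2
      + (if i = n then - N * (‖x‖ ^ 2)⁻¹ else 0) - (N : ℝ) / 2 * (‖x‖ ^ 2)⁻¹ := by
    intro i
    rw [hvec_fderiv n i x hx, hvec]
    by_cases hin : i = n
    · subst hin
      simp only [if_true]
      field_simp
      ring
    · simp only [hin, if_false]
      ring
  simp_rw [key]
  rw [Finset.sum_sub_distrib, Finset.sum_add_distrib, ← Finset.mul_sum, ← hs]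
  simp
  field_simp
  ring

lemma norm_gradient_sq {N : ℕ} (φ : EuclideanSpace ℝ (Fin N) → ℝ) (x : EuclideanSpace ℝ (Fin N)) :
    ‖gradient φ x‖ ^ 2 = ∑ i, (fderiv ℝ φ x (EuclideanSpace.single i 1)) ^ 2 := by
  rw [EuclideanSpace.real_norm_sq_eq]
  refine Finset.sum_congr rfl fun i _ => ?_
  have : fderiv ℝ φ x (EuclideanSpace.single i 1) = inner ℝ (gradient φ x) (EuclideanSpace.single i 1) := by
    simp [gradient]
  rw [this, EuclideanSpace.inner_single_right]
  simp

/-- Hardy inequality in the half-space: for smooth compactly supported `φ` in `ℝ^N_+`,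
`∫ |∇φ|² ≥ (N²/4) ∫ φ²/|x|²`. -/
theorem stmt0 (N : ℕ) (hN : 2 ≤ N) (φ : EuclideanSpace ℝ (Fin N) → ℝ)
    (hφ : ContDiff ℝ (⊤ : ℕ∞) φ) (hcomp : HasCompactSupport φ)
    (hsupp : tsupport φ ⊆ upperHalf N) :
    ((N : ℝ) ^ 2 / 4) * ∫ x in upperHalf N, (φ x) ^ 2 / ‖x‖ ^ 2 ≤
      ∫ x in upperHalf N, ‖gradient φ x‖ ^ 2 := by
  have hN0 : 0 < N := by omega
  obtain ⟨n, hn⟩ : ∃ n : Fin N, ∀ x : EuclideanSpace ℝ (Fin N), lastCoord x = x n :=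
    ⟨⟨N - 1, Nat.sub_lt hN0 one_pos⟩, fun x => by simp [lastCoord, hN0]⟩
  have hpos : ∀ x ∈ tsupport φ, 0 < x n := fun x hx => by
    have h := hsupp hx
    simp only [upperHalf, Set.mem_ofPred_eq, hn] at h
    exact h
  have hφ1 : ContDiff ℝ 1 φ := hφ.of_le (by exact_mod_cast le_top)
  set F : Fin N → EuclideanSpace ℝ (Fin N) → ℝ := fun i x => φ x ^ 2 * hvec n i x with hF
  have htF : ∀ i, tsupport (F i) ⊆ tsupport φ := fun i => by
    refine closure_mono fun x hx => ?_
    simp only [Function.mem_support, hF] at hx ⊢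
    intro h; simp [h] at hx
  have hFc : ∀ i, HasCompactSupport (F i) := fun i =>
    hcomp.of_isClosed_subset (isClosed_tsupport _) (htF i)
  have hFd : ∀ i, ContDiff ℝ 1 (F i) := fun i => contDiff_iff_contDiffAt.2 fun x => by
    by_cases hx : x ∈ tsupport (F i)
    swap
    · exact (contDiffAt_const (c := (0:ℝ))).congr_of_eventuallyEq
        (notMem_tsupport_iff_eventuallyEq.1 hx)
    exact (hφ1.contDiffAt.pow 2).mul (hvec_contDiffAt n i x (hpos x (htF i hx)))
  have hFi : ∀ i, Integrable (fun x => fderiv ℝ (F i) x (EuclideanSpace.single i 1)) := fun i =>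
    (((hFd i).continuous_fderiv one_ne_zero).clm_apply continuous_const).integrable_of_hasCompactSupport
      ((hFc i).fderiv_apply (𝕜 := ℝ) _)
  have hF0 : ∀ i, ∫ x, fderiv ℝ (F i) x (EuclideanSpace.single i 1) = 0 := fun i => by
    have := integral_mul_fderiv_eq_neg_fderiv_mul_of_integrable (μ := volume)
      (f := fun _ : EuclideanSpace ℝ (Fin N) => (1:ℝ)) (g := F i) (v := EuclideanSpace.single i 1)
      (by simp) (by simpa using hFi i)
      (by simpa using (hFd i).continuous.integrable_of_hasCompactSupport (hFc i))
      (fun x _ => by fun_prop) (fun x _ => (hFd i).differentiable one_ne_zero x)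
    simpa using this
  have hout : ∀ x, x ∉ upperHalf N → x ∉ tsupport φ := fun x hx h => hx (hsupp h)
  have hfd0 : ∀ x, x ∉ tsupport φ → fderiv ℝ φ x = 0 := fun x hx =>
    image_eq_zero_of_notMem_tsupport (fun h => hx (tsupport_fderiv_subset ℝ h))
  have hg : ∀ x, x ∉ upperHalf N → ‖gradient φ x‖ ^ 2 = 0 := fun x hx => by
    simp [gradient, hfd0 x (hout x hx)]
  have hz : ∀ x, x ∉ upperHalf N → (φ x) ^ 2 / ‖x‖ ^ 2 = 0 := fun x hx => by
    simp [image_eq_zero_of_notMem_tsupport (hout x hx)]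
  rw [setIntegral_eq_integral_of_forall_compl_eq_zero hg,
    setIntegral_eq_integral_of_forall_compl_eq_zero hz]
  have hgI : Integrable (fun x => ‖gradient φ x‖ ^ 2) := by
    simp_rw [norm_gradient_sq]
    refine integrable_finsetSum _ fun i _ => ?_
    have hcont : Continuous
        (fun x => (fderiv ℝ φ x (EuclideanSpace.single i 1)) ^ 2) :=
      ((hφ1.continuous_fderiv one_ne_zero).clm_apply continuous_const).pow 2
    refine hcont.integrable_of_hasCompactSupport ?_
    exact (hcomp.fderiv_apply (𝕜 := ℝ) (EuclideanSpace.single i 1)).comp_left (g := fun t : ℝ => t ^ 2) (by simp)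
  have hzI : Integrable (fun x => (φ x) ^ 2 / ‖x‖ ^ 2) := by
    have hsub : tsupport (fun x => (φ x) ^ 2 / ‖x‖ ^ 2) ⊆ tsupport φ := by
      refine closure_mono fun x hx => ?_
      simp only [Function.mem_support] at hx ⊢
      intro h; simp [h] at hx
    refine Continuous.integrable_of_hasCompactSupport ?_
      (hcomp.of_isClosed_subset (isClosed_tsupport _) hsub)
    refine continuous_of_tsupport fun x hx => ?_
    have hx' := hpos x (hsub hx)
    have h0 : x ≠ 0 := by rintro rfl; simp at hx'
    exact (hφ1.continuous.continuousAt.pow 2).div (continuous_norm.continuousAt.pow 2) (by positivity)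
  have hpt : ∀ x, (N : ℝ) ^ 2 / 4 * ((φ x) ^ 2 / ‖x‖ ^ 2)
      + ∑ i, fderiv ℝ (F i) x (EuclideanSpace.single i 1) ≤ ‖gradient φ x‖ ^ 2 := by
    intro x
    by_cases hx : x ∈ tsupport φ
    · have hx' := hpos x hx
      have hd : ∀ i, fderiv ℝ (F i) x (EuclideanSpace.single i 1) =
          2 * φ x * fderiv ℝ φ x (EuclideanSpace.single i 1) * hvec n i x
          + φ x ^ 2 * fderiv ℝ (hvec n i) x (EuclideanSpace.single i 1) := fun i => by
        have h1 := ((hφ1.differentiable one_ne_zero x).hasFDerivAt.pow 2).mul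
          ((hvec_contDiffAt n i x hx').differentiableAt one_ne_zero).hasFDerivAt
        have h2 : HasFDerivAt (F i) _ x := h1
        rw [h2.fderiv]
        simp
        ring
      have hS := hvec_sum n x hx'
      have hsq : 0 ≤ ∑ i, (fderiv ℝ φ x (EuclideanSpace.single i 1) - φ x * hvec n i x) ^ 2 :=
        Finset.sum_nonneg fun i _ => sq_nonneg _
      have heq : ∑ i, (fderiv ℝ φ x (EuclideanSpace.single i 1) - φ x * hvec n i x) ^ 2
          = ∑ i, (fderiv ℝ φ x (EuclideanSpace.single i 1)) ^ 2
            - ∑ i, fderiv ℝ (F i) x (EuclideanSpace.single i 1)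
            + φ x ^ 2 * ∑ i, (hvec n i x ^ 2
              + fderiv ℝ (hvec n i) x (EuclideanSpace.single i 1)) := by
        rw [Finset.mul_sum, ← Finset.sum_sub_distrib, ← Finset.sum_add_distrib]
        refine Finset.sum_congr rfl fun i _ => ?_
        rw [hd i]; ring
      rw [heq, hS, ← norm_gradient_sq] at hsq
      rw [div_eq_mul_inv (φ x ^ 2)]
      linarith
    · have h1 : ∀ i, fderiv ℝ (F i) x = 0 := fun i =>
        image_eq_zero_of_notMem_tsupport (fun h => hx (htF i (tsupport_fderiv_subset ℝ h)))
      simp only [h1, image_eq_zero_of_notMem_tsupport hx]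
      simp
  have hmono := integral_mono ((hzI.const_mul ((N : ℝ) ^ 2 / 4)).add
    (integrable_finsetSum Finset.univ fun i _ => hFi i)) hgI hpt
  rw [integral_add' (hzI.const_mul _) (integrable_finsetSum Finset.univ fun i _ => hFi i),
    integral_finsetSum _ fun i _ => hFi i, integral_const_mul] at hmono
  simpa [hF0] using hmono
end
end

section
/- Let N ≥ 2 and μ₁ = −N²/4. Then the function u(x) := |x|^{−N/2} x_N ln(1/|x|) is C² on ℝ^N_+ and satisfies −Δu(x) + (μ₁/|x|²) u(x) = 0 for every x ∈ ℝ^N_+. -/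
open MeasureTheory Real Set Filter

noncomputable section

theorem line_second {N : ℕ} (f : EuclideanSpace ℝ (Fin N) → ℝ) (l : EuclideanSpace ℝ (Fin N) →L[ℝ] ℝ)
    (g g1 g2 : ℝ → ℝ) (hg : ∀ s, 0 < s → HasDerivAt g (g1 s) s)
    (hg1 : ∀ s, 0 < s → HasDerivAt g1 (g2 s) s)
    (hf : ∀ x, x ≠ 0 → f x = l x * g (‖x‖ ^ 2))
    (x v : EuclideanSpace ℝ (Fin N)) (hx : x ≠ 0) (hc : ContDiffAt ℝ 2 f x) :
    iteratedFDeriv ℝ 2 f x ![v, v] =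
      4 * l v * g1 (‖x‖ ^ 2) * inner ℝ x v + 4 * l x * g2 (‖x‖ ^ 2) * (inner ℝ x v) ^ 2
        + 2 * l x * g1 (‖x‖ ^ 2) * inner ℝ v v := by
  have hpos : ∀ y : EuclideanSpace ℝ (Fin N), y ≠ 0 → 0 < ‖y‖ ^ 2 := fun y hy => by positivity
  have hs : ∀ y : EuclideanSpace ℝ (Fin N),
      HasFDerivAt (fun y : EuclideanSpace ℝ (Fin N) => ‖y‖ ^ 2) (2 • (innerSL ℝ y)) y :=
    fun y => (hasStrictFDerivAt_norm_sq y).hasFDerivAt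
  have hnear : ∀ y : EuclideanSpace ℝ (Fin N), y ≠ 0 → ∀ᶠ z in nhds y, z ≠ 0 :=
    fun y hy => isOpen_ne.mem_nhds hy
  have h1 : ∀ y : EuclideanSpace ℝ (Fin N), y ≠ 0 →
      fderiv ℝ f y v = g (‖y‖ ^ 2) * l v + 2 * (l y * (g1 (‖y‖ ^ 2) * inner ℝ y v)) := by
    intro y hy
    have h := (l.hasFDerivAt (x := y)).mul ((hg _ (hpos y hy)).comp_hasFDerivAt y (hs y))
    have h' : f =ᶠ[nhds y] (fun z => l z * g (‖z‖ ^ 2)) := by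
      filter_upwards [hnear y hy] with z hz using hf z hz
    rw [(h.congr_of_eventuallyEq h').fderiv]
    simp
    ring
  have hd : DifferentiableAt ℝ (fderiv ℝ f) x :=
    (hc.fderiv_right (m := 1) (by norm_num)).differentiableAt (by norm_num)
  have h2 : iteratedFDeriv ℝ 2 f x ![v, v] = fderiv ℝ (fun y => fderiv ℝ f y v) x v := by
    rw [iteratedFDeriv_two_apply]
    rw [fderiv_clm_apply hd (by fun_prop)]
    simp
  rw [h2]
  have hin : HasFDerivAt (fun y : EuclideanSpace ℝ (Fin N) => inner ℝ y v) (innerSL ℝ v) x := by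
    have := (innerSL ℝ v).hasFDerivAt (x := x)
    refine this.congr_of_eventuallyEq (Eventually.of_forall fun y => ?_)
    simp [real_inner_comm]
  have h := (((hg _ (hpos x hx)).comp_hasFDerivAt x (hs x)).mul_const (l v)).add
    (((l.hasFDerivAt (x := x)).mul
      (((hg1 _ (hpos x hx)).comp_hasFDerivAt x (hs x)).mul hin)).const_mul 2)
  have h' : (fun y => fderiv ℝ f y v) =ᶠ[nhds x]
      (fun y => g (‖y‖ ^ 2) * l v + 2 * (l y * (g1 (‖y‖ ^ 2) * inner ℝ y v))) := by
    filter_upwards [hnear x hx] with z hz using h1 z hz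
  rw [(h.congr_of_eventuallyEq h').fderiv]
  simp
  ring

/-- At the critical value `μ₁ = −N²/4`, the function `|x|^{−N/2} x_N ln(1/|x|)` is a
`C²` solution of `−Δu + μ₁|x|⁻²u = 0` in the half-space. -/
theorem stmt3 (N : ℕ) (hN : 2 ≤ N) (μ₁ : ℝ) (hμ₁ : μ₁ = -((N : ℝ) ^ 2 / 4))
    (u : EuclideanSpace ℝ (Fin N) → ℝ)
    (hu : ∀ x, u x = ‖x‖ ^ (-(N : ℝ) / 2) * lastCoord x * Real.log (1 / ‖x‖)) :
    ContDiffOn ℝ 2 u (upperHalf N) ∧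
      ∀ x ∈ upperHalf N, -lap u x + μ₁ / ‖x‖ ^ 2 * u x = 0 := by
  have hN0 : 0 < N := by omega
  set k : Fin N := ⟨N - 1, Nat.sub_lt hN0 one_pos⟩ with hk
  set l : EuclideanSpace ℝ (Fin N) →L[ℝ] ℝ := EuclideanSpace.proj k with hl
  have hlast : ∀ x : EuclideanSpace ℝ (Fin N), lastCoord x = l x := by
    intro x
    simp [lastCoord, hN0, hl, hk]
  have hne : ∀ x ∈ upperHalf N, x ≠ 0 := by
    rintro x hx rfl
    simp [upperHalf, hlast] at hx
  have hu' : u = fun x => ‖x‖ ^ (-(N : ℝ) / 2) * l x * Real.log (1 / ‖x‖) := by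
    funext x
    rw [hu, hlast]
  have hc : ∀ x : EuclideanSpace ℝ (Fin N), x ≠ 0 → ContDiffAt ℝ 2 u x := by
    intro x hx
    have hn : ContDiffAt ℝ 2 (fun y : EuclideanSpace ℝ (Fin N) => ‖y‖) x := contDiffAt_norm ℝ hx
    have hx' : ‖x‖ ≠ 0 := norm_ne_zero_iff.2 hx
    rw [hu']
    refine ((hn.rpow_const_of_ne hx').mul l.contDiff.contDiffAt).mul ?_
    exact (contDiffAt_const.div hn hx').log (one_div_ne_zero hx')
  refine ⟨fun x hx => (hc x (hne x hx)).contDiffWithinAt, fun x hx => ?_⟩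
  have hx0 := hne x hx
  set b : ℝ := -(N : ℝ) / 4 with hb
  have hder : ∀ c s : ℝ, 0 < s → HasDerivAt (fun s : ℝ => s ^ c) (s ^ c * c / s) s := by
    intro c s hs
    have := Real.hasDerivAt_rpow_const (x := s) (p := c) (Or.inl hs.ne')
    rw [Real.rpow_sub_one hs.ne'] at this
    convert this using 1
    ring
  have hg : ∀ s : ℝ, 0 < s → HasDerivAt (fun s : ℝ => -(1 / 2) * (s ^ b * Real.log s))
      ((fun s : ℝ => -(1 / 2) * (s ^ b * (b * Real.log s + 1) / s)) s) s := by
    intro s hs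
    refine (((hder b s hs).mul (Real.hasDerivAt_log hs.ne')).const_mul (-(1 / 2))).congr_deriv ?_
    show _ = -(1 / 2) * (s ^ b * (b * Real.log s + 1) / s)
    field_simp
  have hg1 : ∀ s : ℝ, 0 < s → HasDerivAt (fun s : ℝ => -(1 / 2) * (s ^ b * (b * Real.log s + 1) / s))
      ((fun s : ℝ => -(1 / 2) * (s ^ b * (b * (b - 1) * Real.log s + 2 * b - 1) / s ^ 2)) s) s := by
    intro s hs
    refine (((((hder b s hs).mul (((Real.hasDerivAt_log hs.ne').const_mul b).add_const 1)).div
      (hasDerivAt_id s) hs.ne')).const_mul (-(1 / 2))).congr_deriv ?_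
    simp only [id, Pi.mul_apply]
    field_simp
    ring
  have hf : ∀ y : EuclideanSpace ℝ (Fin N), y ≠ 0 →
      u y = l y * (fun s : ℝ => -(1 / 2) * (s ^ b * Real.log s)) (‖y‖ ^ 2) := by
    intro y hy
    have h1 : (‖y‖ ^ 2) ^ b = ‖y‖ ^ (-(N : ℝ) / 2) := by
      rw [← Real.rpow_natCast, ← Real.rpow_mul (norm_nonneg y)]
      congr 1
      rw [hb]
      push_cast
      ring
    simp only [hu', h1, Real.log_pow, one_div, Real.log_inv]
    push_cast
    ring
  have hlap := fun v => line_second u l _ _ _ hg hg1 hf x v hx0 (hc x hx0)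
  have hsq : ∑ i : Fin N, (x i) ^ 2 = ‖x‖ ^ 2 := by
    simp [EuclideanSpace.norm_sq_eq]
  have hinn : ∀ i : Fin N, inner ℝ x (EuclideanSpace.single i (1 : ℝ)) = x i := by
    intro i
    simp [EuclideanSpace.inner_single_right]
  have hvv : ∀ i : Fin N, inner ℝ (EuclideanSpace.single i (1 : ℝ) : EuclideanSpace ℝ (Fin N))
      (EuclideanSpace.single i (1 : ℝ)) = (1 : ℝ) := by
    intro i
    simp [EuclideanSpace.inner_single_right]
  have hlv : ∀ C : ℝ, ∑ i : Fin N, 4 * l (EuclideanSpace.single i (1 : ℝ)) * C * x i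
      = 4 * C * l x := by
    intro C
    rw [Finset.sum_eq_single k]
    · simp [hl]
    · intro i _ hi
      simp [hl, hi.symm]
    · simp
  have hs : 0 < ‖x‖ ^ 2 := by positivity
  unfold lap
  simp only [hlap, hinn, hvv, Finset.sum_add_distrib]
  rw [hlv, ← Finset.mul_sum, hsq, hf x hx0, hμ₁]
  simp only [Finset.sum_const, Finset.card_univ, Fintype.card_fin, nsmul_eq_mul]
  have hNb : (N : ℝ) = -4 * b := by rw [hb]; ring
  rw [hNb]
  generalize ‖x‖ ^ 2 = s at hs
  field_simp
  ring
end
end
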